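/- arXiv:0906.1699 — 4 statements merged into one kernel-verified Lean document; each statement's English description precedes it below -/
import Mathlib

section
/- Let h : ℝ → ℝ be continuous and nondecreasing on [0,∞) with h(0) = 0 and h(x) > 0 for every x > 0, and suppose that ∫_{(0,ε)} h(v)^{-2} dv = ∞ for every ε > 0. Then there exists a strictly decreasing sequence (a_n)_{n≥0} of real numbers with a_0 = 1, a_n > 0 for all n, a_n → 0 as n → ∞, and ∫_{a_n}^{a_{n-1}} h(v)^{-2} dv = n for every n ≥ 1. -/
open MeasureTheory Set Filter

/-!
Write `g = h⁻²`, which is continuous and positive on `(0, ∞)`. Since `g` is not integrable at `0`,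
for each `b > 0` the function `x ↦ ∫_x^b g` is unbounded on `(0, b]`. It is continuous there and
vanishes at `b`, so by the intermediate value theorem it attains every `c > 0` at some point of
`(0, b)` (`exists_intervalIntegral_eq`). Iterating from `a 0 = 1` with `c = 1, 2, 3, …` gives the
sequence. If it stayed above some `ε > 0`, then `n = ∫_{a n}^{a (n-1)} g ≤ ∫_ε^1 g` for all
`n ≥ 1`, which is absurd; hence `a n → 0`.
-/

/-- A function that is continuous and positive on `(0, ∞)` and not integrable at `0` has integrals
`∫_a^b g` that attain every positive value, for each fixed `b > 0`. -/
lemma exists_intervalIntegral_eq {g : ℝ → ℝ} (hg : ContinuousOn g (Ioi 0))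
    (hpos : ∀ x > 0, 0 < g x)
    (hint : ∀ ε > 0, ∫⁻ v in Ioo 0 ε, ENNReal.ofReal (g v) = ⊤)
    {b c : ℝ} (hb : 0 < b) (hc : 0 < c) :
    ∃ a, 0 < a ∧ a < b ∧ ∫ v in a..b, g v = c := by
  have hii : ∀ x y, 0 < x → 0 < y → IntervalIntegrable g volume x y := fun x y hx hy =>
    (hg.mono fun z hz => lt_of_lt_of_le (lt_min hx hy) hz.1).intervalIntegrable
  obtain ⟨d, hd0, hdb, hd⟩ : ∃ d, 0 < d ∧ d < b ∧ c ≤ ∫ v in d..b, g v := by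
    by_contra! hcon
    have hbn : ∀ n : ℕ, 0 < b / ((n : ℝ) + 2) ∧ b / ((n : ℝ) + 2) < b := fun n =>
      ⟨by positivity, div_lt_self hb (by linarith [n.cast_nonneg (α := ℝ)])⟩
    have hlim : Tendsto (fun n : ℕ => b / ((n : ℝ) + 2)) atTop (nhds 0) :=
      tendsto_const_nhds.div_atTop
        (tendsto_atTop_add_const_right _ _ tendsto_natCast_atTop_atTop)
    have hI : IntegrableOn g (Ioc 0 b) := by
      refine integrableOn_Ioc_of_intervalIntegral_norm_bounded_left (I := c)
        (fun n => (hii _ _ (hbn n).1 hb).1) hlim (Eventually.of_forall fun n => ?_)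
      rw [setIntegral_congr_fun (g := g) measurableSet_Ioc fun x hx =>
        Real.norm_of_nonneg (hpos x ((hbn n).1.trans hx.1)).le,
        ← intervalIntegral.integral_of_le (hbn n).2.le]
      exact (hcon _ (hbn n).1 (hbn n).2).le
    have hfin := (hI.mono_set Ioo_subset_Ioc_self).lintegral_lt_top
    exact hfin.ne (hint b hb)
  have hcontF : ContinuousOn (fun x => ∫ v in x..b, g v) (Icc d b) := by
    have := intervalIntegral.continuousOn_primitive_interval_left
      (f := g) (μ := volume) (a := d) (b := b)
      (by
        rw [uIcc_of_le hdb.le]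
        exact (hg.mono fun z hz => hd0.trans_le hz.1).integrableOn_Icc)
    rwa [uIcc_of_le hdb.le] at this
  obtain ⟨a, ha, hac⟩ := intermediate_value_Icc' hdb.le hcontF
    (show c ∈ Icc _ _ from ⟨by simpa using hc.le, hd⟩)
  refine ⟨a, hd0.trans_le ha.1, lt_of_le_of_ne ha.2 ?_, hac⟩
  rintro rfl
  simp at hac
  exact hc.ne hac

theorem yamada_watanabe_sequence (h : ℝ → ℝ)
    (hcont : ContinuousOn h (Ici 0)) (hmono : MonotoneOn h (Ici 0))
    (h0 : h 0 = 0) (hpos : ∀ x > 0, 0 < h x)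
    (hint : ∀ ε > 0, ∫⁻ v in Ioo 0 ε, ENNReal.ofReal (((h v) ^ 2)⁻¹) = ⊤) :
    ∃ a : ℕ → ℝ, StrictAnti a ∧ a 0 = 1 ∧ (∀ n, 0 < a n) ∧
      Tendsto a atTop (nhds 0) ∧
      ∀ n : ℕ, 1 ≤ n → (∫ v in (a n)..(a (n - 1)), ((h v) ^ 2)⁻¹) = n := by
  have hg : ContinuousOn (fun v => ((h v) ^ 2)⁻¹) (Ioi 0) :=
    ((hcont.mono Ioi_subset_Ici_self).pow 2).inv₀ fun x hx => (pow_pos (hpos x hx) 2).ne'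
  have hgpos : ∀ x > 0, 0 < ((h x) ^ 2)⁻¹ := fun x hx => inv_pos.2 (pow_pos (hpos x hx) 2)
  have step : ∀ (n : ℕ) (b : {x : ℝ // 0 < x}), ∃ a : {x : ℝ // 0 < x},
      a.1 < b.1 ∧ ∫ v in a.1..b.1, ((h v) ^ 2)⁻¹ = ((n + 1 : ℕ) : ℝ) := fun n b => by
    obtain ⟨a, ha, hab, hI⟩ := exists_intervalIntegral_eq hg hgpos hint b.2
      (c := ((n + 1 : ℕ) : ℝ)) (by positivity)
    exact ⟨⟨a, ha⟩, hab, hI⟩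
  choose f hf hfI using step
  let s : ℕ → {x : ℝ // 0 < x} := fun n => Nat.rec ⟨1, one_pos⟩ f n
  have hanti : StrictAnti fun n => (s n).1 := strictAnti_nat_of_succ_lt fun n => hf n (s n)
  have hI : ∀ n, ∫ v in (s (n + 1)).1..(s n).1, ((h v) ^ 2)⁻¹ = ((n + 1 : ℕ) : ℝ) :=
    fun n => hfI n (s n)
  refine ⟨fun n => (s n).1, hanti, rfl, fun n => (s n).2, ?_, ?_⟩
  · refine tendsto_order.2 ⟨fun y hy => Eventually.of_forall fun n => hy.trans (s n).2,
      fun ε hε => ?_⟩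
    obtain ⟨N, hN⟩ : ∃ N, (s N).1 < ε := by
      by_contra! hcon
      obtain ⟨n, hn⟩ := exists_nat_gt (∫ v in ε..1, ((h v) ^ 2)⁻¹)
      have h1 : (s n).1 ≤ 1 := hanti.antitone (Nat.zero_le n)
      have hle : ∫ v in (s (n + 1)).1..(s n).1, ((h v) ^ 2)⁻¹ ≤ ∫ v in ε..1, ((h v) ^ 2)⁻¹ := by
        refine intervalIntegral.integral_mono_interval (hcon (n + 1)) (hf n (s n)).le h1
          (Eventually.of_forall fun x => by positivity)
          (hg.mono fun z hz => lt_of_lt_of_le (lt_min hε one_pos) hz.1).intervalIntegrable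
      rw [hI] at hle
      push_cast at hle
      linarith
    filter_upwards [eventually_ge_atTop N] with n hn
    exact (hanti.antitone hn).trans_lt hN
  · intro n hn
    obtain ⟨m, rfl⟩ := Nat.exists_eq_add_of_le' hn
    exact hI m
end

section
/- Let h : ℝ → ℝ be continuous and nondecreasing on [0,∞) with h(0) = 0 and h(x) > 0 for every x > 0. Let 0 < a < b and N > 0 be such that ∫_a^b h(v)^{-2} dv ≥ N. Then there exists a continuous function ρ : ℝ → ℝ with ρ ≥ 0, ρ(v) = 0 for every v outside the open interval (a,b), ∫_ℝ ρ(v) dv = 1, and ρ(v) ≤ 2/(N · h(v)^2) for every v ∈ (a,b). -/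
open MeasureTheory Set Filter

/-!
Let `g v = h(max v a)⁻²`, which is continuous on all of `ℝ` and agrees with `h⁻²` on `[a, b]`.
Multiply it by the trapezoidal cutoffs `χₙ v = min 1 (n · max 0 (min (v - a) (b - v)))`, which
vanish off `(a, b)` and tend to `1` pointwise on `(a, b)`. By dominated convergence
`∫ χₙ g → ∫ₐᵇ h⁻² ≥ N`, so some `n` gives `I = ∫ χₙ g > N / 2`, and `ρ = χₙ g / I` is the
required density.
-/

theorem yamada_watanabe_density (h : ℝ → ℝ)
    (hcont : ContinuousOn h (Ici 0)) (hmono : MonotoneOn h (Ici 0))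
    (h0 : h 0 = 0) (hpos : ∀ x > 0, 0 < h x)
    (a b N : ℝ) (ha : 0 < a) (hab : a < b) (hN : 0 < N)
    (hint : N ≤ ∫ v in a..b, ((h v) ^ 2)⁻¹) :
    ∃ ρ : ℝ → ℝ, Continuous ρ ∧ (∀ v, 0 ≤ ρ v) ∧
      (∀ v ∉ Ioo a b, ρ v = 0) ∧ (∫ v, ρ v = 1) ∧
      (∀ v ∈ Ioo a b, ρ v ≤ 2 / (N * (h v) ^ 2)) := by
  obtain ⟨g, hg⟩ : ∃ g : ℝ → ℝ, g = fun v => ((h (max v a)) ^ 2)⁻¹ := ⟨_, rfl⟩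
  have hpos' : ∀ v, 0 < h (max v a) := fun v => hpos _ (lt_max_of_lt_right ha)
  have hgc : Continuous g := by
    have hc : Continuous fun v => h (max v a) :=
      hcont.comp_continuous (by fun_prop) fun v => ha.le.trans (le_max_right v a)
    rw [hg]
    exact (hc.pow 2).inv₀ fun v => (pow_pos (hpos' v) 2).ne'
  have hgpos : ∀ v, 0 < g v := fun v => by
    rw [hg]
    exact inv_pos.2 (pow_pos (hpos' v) 2)
  have hgeq : ∀ v, a ≤ v → g v = ((h v) ^ 2)⁻¹ := fun v hv => by
    simp only [hg, max_eq_left hv]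
  obtain ⟨χ, hχ⟩ : ∃ χ : ℕ → ℝ → ℝ,
    χ = fun (n : ℕ) v => min 1 ((n : ℝ) * max 0 (min (v - a) (b - v))) := ⟨_, rfl⟩
  have hχc : ∀ n, Continuous (χ n) := fun n => by
    rw [hχ]
    fun_prop
  have hχ0 : ∀ n v, 0 ≤ χ n v := fun n v => by
    rw [hχ]
    exact le_min zero_le_one (mul_nonneg n.cast_nonneg (le_max_left _ _))
  have hχ1 : ∀ n v, χ n v ≤ 1 := fun n v => by
    rw [hχ]
    exact min_le_left _ _
  have hχout : ∀ n, ∀ v ∉ Ioo a b, χ n v = 0 := fun n v hv => by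
    have hm : min (v - a) (b - v) ≤ 0 := by
      by_contra! hc
      obtain ⟨h1, h2⟩ := lt_min_iff.1 hc
      exact hv ⟨by linarith, by linarith⟩
    simp [hχ, max_eq_left hm]
  have hχlim : ∀ v ∈ Ioo a b, ∀ᶠ n in atTop, χ n v = 1 := fun v hv => by
    have hm : 0 < max 0 (min (v - a) (b - v)) :=
      lt_max_of_lt_right (lt_min (by linarith [hv.1]) (by linarith [hv.2]))
    have ht := (tendsto_natCast_atTop_atTop (R := ℝ)).atTop_mul_const hm
    filter_upwards [ht.eventually_ge_atTop 1] with n hn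
    rw [hχ]
    exact min_eq_left hn
  have hlim : Tendsto (fun n => ∫ v in a..b, χ n v * g v) atTop (nhds (∫ v in a..b, g v)) := by
    refine intervalIntegral.tendsto_integral_filter_of_dominated_convergence g
      (Eventually.of_forall fun n => ((hχc n).mul hgc).aestronglyMeasurable)
      (Eventually.of_forall fun n => ae_of_all _ fun v _ => ?_)
      (hgc.intervalIntegrable a b) ?_
    · rw [Real.norm_of_nonneg (mul_nonneg (hχ0 n v) (hgpos v).le)]
      exact mul_le_of_le_one_left (hgpos v).le (hχ1 n v)
    · -- `χₙ b = 0` for all `n`, so convergence fails at `b`; that point is a null set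
      have hb : ∀ᵐ v : ℝ, v ≠ b := compl_mem_ae_iff.2 (measure_singleton b)
      filter_upwards [hb] with v hvb hv
      rw [uIoc_of_le hab.le] at hv
      refine tendsto_const_nhds.congr' ?_
      filter_upwards [hχlim v ⟨hv.1, lt_of_le_of_ne hv.2 hvb⟩] with n hn
      rw [hn, one_mul]
  have hNg : N / 2 < ∫ v in a..b, g v := by
    have : ∫ v in a..b, g v = ∫ v in a..b, ((h v) ^ 2)⁻¹ :=
      intervalIntegral.integral_congr fun v hv => hgeq v (by
        rw [uIcc_of_le hab.le] at hv
        exact hv.1)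
    linarith
  obtain ⟨n, hn⟩ := (hlim.eventually_const_lt hNg).exists
  obtain ⟨I, hI⟩ : ∃ I, I = ∫ v in a..b, χ n v * g v := ⟨_, rfl⟩
  rw [← hI] at hn
  have hIpos : 0 < I := by linarith
  have hfull : ∫ v, χ n v * g v = I := by
    rw [hI, intervalIntegral.integral_of_le hab.le]
    refine (setIntegral_eq_integral_of_forall_compl_eq_zero fun v hv => ?_).symm
    rw [hχout n v fun hv' => hv (Ioo_subset_Ioc_self hv'), zero_mul]
  refine ⟨fun v => χ n v * g v / I, ((hχc n).mul hgc).div_const I,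
    fun v => div_nonneg (mul_nonneg (hχ0 n v) (hgpos v).le) hIpos.le,
    fun v hv => by simp [hχout n v hv], ?_, fun v hv => ?_⟩
  · rw [integral_div, hfull, div_self hIpos.ne']
  · calc χ n v * g v / I ≤ g v / (N / 2) :=
          div_le_div₀ (hgpos v).le (mul_le_of_le_one_left (hgpos v).le (hχ1 n v))
            (by positivity) hn.le
      _ = 2 / (N * (h v) ^ 2) := by
          rw [hgeq v hv.1.le]
          have := hpos v (ha.trans hv.1)
          field_simp
end

section
/- Let ρ : ℝ → ℝ be measurable with ρ ≥ 0 and ρ integrable on ℝ. Then for all D, ζ ∈ ℝ, the (oriented) interval integral satisfies ∫_0^ζ ρ(D + r) · (ζ − r) dr ≤ ∫_ℝ ρ(D + r) · max(|ζ| − |r|, 0) dr. -/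
/-!
On the interval between `0` and `ζ` the oriented integrand `± ρ (D + r) * (ζ - r)` coincides with
`ρ (D + r) * max (|ζ| - |r|) 0`, so the left-hand side is the integral of the latter over that
interval. As this function is nonnegative and integrable (an integrable function times a bounded
one), its integral over the interval is at most its integral over the line.
-/

open MeasureTheory Set Filter

theorem taylor_remainder_le_truncated_integral (ρ : ℝ → ℝ)
    (hmeas : Measurable ρ) (hρ0 : ∀ v, 0 ≤ ρ v) (hint : Integrable ρ) :
    ∀ D ζ : ℝ, (∫ r in (0:ℝ)..ζ, ρ (D + r) * (ζ - r)) ≤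
      ∫ r : ℝ, ρ (D + r) * max (|ζ| - |r|) 0 := by
  intro D ζ
  have hg0 : ∀ r, 0 ≤ ρ (D + r) * max (|ζ| - |r|) 0 := fun r =>
    mul_nonneg (hρ0 _) (le_max_right _ _)
  have hgint : Integrable (fun r => ρ (D + r) * max (|ζ| - |r|) 0) := by
    refine (hint.comp_add_left D).mul_bdd (c := |ζ|) ?_ ?_
    · exact (by fun_prop : Continuous fun r : ℝ => max (|ζ| - |r|) 0).aestronglyMeasurable
    · refine Eventually.of_forall fun r => ?_
      rw [Real.norm_of_nonneg (le_max_right _ _)]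
      exact max_le (by linarith [abs_nonneg r]) (abs_nonneg ζ)
  rcases le_total 0 ζ with h | h
  · rw [intervalIntegral.integral_of_le h]
    calc _ = ∫ r in Ioc 0 ζ, ρ (D + r) * max (|ζ| - |r|) 0 := by
          refine setIntegral_congr_fun measurableSet_Ioc fun r hr => ?_
          rw [abs_of_nonneg h, abs_of_pos hr.1, max_eq_left (by linarith [hr.2])]
      _ ≤ _ := setIntegral_le_integral hgint (Eventually.of_forall hg0)
  · rw [intervalIntegral.integral_of_ge h, ← integral_neg]
    calc _ = ∫ r in Ioc ζ 0, ρ (D + r) * max (|ζ| - |r|) 0 := by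
          refine setIntegral_congr_fun measurableSet_Ioc fun r hr => ?_
          rw [abs_of_nonpos h, abs_of_nonpos hr.2, max_eq_left (by linarith [hr.1])]
          ring
      _ ≤ _ := setIntegral_le_integral hgint (Eventually.of_forall hg0)
end

section
/- Let h : ℝ → ℝ be continuous and nondecreasing on [0,∞) with h(0) = 0 and h(x) > 0 for every x > 0, and suppose that ∫_{(0,ε)} h(v)^{-2} dv = ∞ for every ε > 0. Then there exists a sequence of functions ψ_n : ℝ → ℝ (n ≥ 1) such that for every n: ψ_n is twice continuously differentiable, ψ_n is even, ψ_n(0) = 0, |ψ_n'(y)| ≤ 1 for all y, 0 ≤ ψ_n''(y) ≤ 2/(n · h(|y|)²) for all y ≠ 0, and for every v ∈ ℝ the sequence n ↦ ψ_n(v) is nondecreasing with ψ_n(v) → |v| as n → ∞. -/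
/-!
The function `ψ n` is the double primitive, vanishing to first order at `0`, of an even continuous
bump `ρ n` of mass one on the positive half-line. Since `h⁻²` is not integrable at `0`, such a bump
can be placed in any `(b, a)` with `b` small enough, while staying below `C / h²` for a prescribed
`C > 0` (`exists_bump`). Taking `C = 2 / (n + 1)` and stacking the supports as `(a (n+1), a n)` with
`a (n+1) ≤ a n / 2`, the first derivative of `ψ n` on `[0, ∞)` climbs from `0` to `1` across
`[a (n+1), a n]`. Hence it is nondecreasing in `n`, because the derivative of `ψ (n+1)` is already
`1` where that of `ψ n` starts to grow, and `x - a n ≤ ψ n x ≤ x` for `x ≥ 0` gives the limit.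
-/

open MeasureTheory Set Filter

/-- The bump carrying one step of the construction, described through its primitive: the primitive
vanishes on `[0, b]` and equals `1` on `[a, ∞)`. It is the function `C / h²` times a piecewise linear
cutoff supported in `[b, a]`, normalised by its integral; that integral is at least `1` for small `b`
because `h⁻²` is not integrable at `0`. -/
lemma exists_bump (h : ℝ → ℝ)
    (hcont : ContinuousOn h (Ici 0)) (hpos : ∀ x > 0, 0 < h x)
    (hint : ∀ ε > 0, ∫⁻ v in Ioo 0 ε, ENNReal.ofReal (((h v) ^ 2)⁻¹) = ⊤)
    (a C : ℝ) (ha : 0 < a) (hC : 0 < C) :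
    ∃ (b : ℝ) (ρ : ℝ → ℝ), 0 < b ∧ b ≤ a / 2 ∧ Continuous ρ ∧ (∀ y, ρ (-y) = ρ y) ∧
      (∀ y, 0 ≤ ρ y) ∧ (∀ y, y ≠ 0 → ρ y ≤ C / (h |y|) ^ 2) ∧
      (∀ y, 0 ≤ y → y ≤ b → ∫ u in (0 : ℝ)..y, ρ u = 0) ∧
      (∀ y, a ≤ y → ∫ u in (0 : ℝ)..y, ρ u = 1) := by
  have hcinv : ContinuousOn (fun v => ((h v) ^ 2)⁻¹) (Ioi 0) := by
    refine ContinuousOn.inv₀ ((hcont.mono Ioi_subset_Ici_self).pow 2) ?_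
    intro x hx
    exact pow_ne_zero _ (hpos x hx).ne'
  obtain ⟨b, hb0, hba, hbI⟩ : ∃ b : ℝ, 0 < b ∧ b ≤ a / 4 ∧
      1 / C ≤ ∫ v in (2 * b)..(a / 2), ((h v) ^ 2)⁻¹ := by
    by_contra! hcon
    have hlim : Tendsto (fun k : ℕ => 2 * (a / 4 * (1 / ((k : ℝ) + 1)))) atTop (nhds 0) := by
      simpa using (tendsto_one_div_add_atTop_nhds_zero_nat.const_mul (a / 4)).const_mul (2 : ℝ)
    have hk : ∀ k : ℕ, 0 < a / 4 * (1 / ((k : ℝ) + 1)) ∧ a / 4 * (1 / ((k : ℝ) + 1)) ≤ a / 4 := by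
      intro k
      refine ⟨by positivity, ?_⟩
      have : 1 / ((k : ℝ) + 1) ≤ 1 := by
        rw [div_le_one (by positivity)]
        linarith [(Nat.cast_nonneg k : (0 : ℝ) ≤ k)]
      nlinarith
    have hI : IntegrableOn (fun v => ((h v) ^ 2)⁻¹) (Ioc 0 (a / 2)) := by
      refine integrableOn_Ioc_of_intervalIntegral_norm_bounded_left (I := 1 / C) ?_ hlim ?_
      · intro k
        refine (ContinuousOn.integrableOn_Icc (hcinv.mono ?_)).mono_set Ioc_subset_Icc_self
        intro x hx
        exact lt_of_lt_of_le (by have := (hk k).1; positivity) hx.1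
      · refine Eventually.of_forall fun k => ?_
        have := hcon _ (hk k).1 (hk k).2
        refine le_trans (le_of_eq ?_) this.le
        rw [intervalIntegral.integral_of_le (by linarith [(hk k).2])]
        refine integral_congr_ae (Eventually.of_forall fun x => ?_)
        simp
    have h1 := (hI.mono_set Ioo_subset_Ioc_self).2
    rw [hasFiniteIntegral_iff_ofReal (Eventually.of_forall fun x => by positivity)] at h1
    exact h1.ne (hint _ (by positivity))
  -- Replacing `h |y|` by `h (max |y| b)` avoids the zero of `h` and changes nothing where `χ ≠ 0`.
  set χ : ℝ → ℝ := fun y => max 0 (min 1 (min ((|y| - b) / b) ((a - |y|) / (a / 2)))) with hχ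
  set r : ℝ → ℝ := fun y => χ y * (C * ((h (max |y| b)) ^ 2)⁻¹) with hr
  have hmaxpos : ∀ y : ℝ, 0 < max |y| b := fun y => lt_max_of_lt_right hb0
  have hχc : Continuous χ := by
    simp only [hχ]; fun_prop
  have hrc : Continuous r := by
    have : Continuous fun y : ℝ => ((h (max |y| b)) ^ 2)⁻¹ :=
      hcinv.comp_continuous (f := fun y : ℝ => max |y| b) (by fun_prop) hmaxpos
    exact hχc.mul (continuous_const.mul this)
  have hχ0 : ∀ y, 0 ≤ χ y := fun y => le_max_left _ _
  have hχ1 : ∀ y, χ y ≤ 1 := fun y => max_le zero_le_one (min_le_left _ _)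
  have hχb : ∀ y, |y| ≤ b → χ y = 0 := by
    intro y hy
    refine max_eq_left ((min_le_right _ _).trans ((min_le_left _ _).trans ?_))
    exact div_nonpos_of_nonpos_of_nonneg (by linarith) hb0.le
  have hχa : ∀ y, a ≤ |y| → χ y = 0 := by
    intro y hy
    refine max_eq_left ((min_le_right _ _).trans ((min_le_right _ _).trans ?_))
    exact div_nonpos_of_nonpos_of_nonneg (by linarith) (by linarith)
  have hχm : ∀ y, 2 * b ≤ |y| → |y| ≤ a / 2 → χ y = 1 := by
    intro y hy hy'
    have h1 : 1 ≤ (|y| - b) / b := by rw [le_div_iff₀ hb0]; linarith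
    have h2 : 1 ≤ (a - |y|) / (a / 2) := by rw [le_div_iff₀ (by linarith)]; linarith
    simp only [hχ]
    rw [min_eq_left (le_min h1 h2)]
    simp
  have hr0 : ∀ y, 0 ≤ r y := fun y => mul_nonneg (hχ0 y) (by positivity)
  have hrle : ∀ y, y ≠ 0 → r y ≤ C / (h |y|) ^ 2 := by
    intro y hy
    rcases le_total |y| b with hyb | hyb
    · simp only [hr, hχb y hyb, zero_mul]; positivity
    · simp only [hr, max_eq_left hyb, div_eq_mul_inv]
      exact mul_le_of_le_one_left (by positivity) (hχ1 y)
  have hii : ∀ x y, IntervalIntegrable r volume x y := fun x y => hrc.intervalIntegrable x y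
  set I := ∫ u in (0 : ℝ)..a, r u with hIdef
  have hI1 : 1 ≤ I := by
    have e1 : ∫ u in (2 * b)..(a / 2), r u = C * ∫ v in (2 * b)..(a / 2), ((h v) ^ 2)⁻¹ := by
      rw [← intervalIntegral.integral_const_mul]
      refine intervalIntegral.integral_congr fun x hx => ?_
      rw [uIcc_of_le (by linarith)] at hx
      have hx0 : |x| = x := abs_of_nonneg (by linarith [hx.1])
      have hxb : max |x| b = x := by rw [hx0]; exact max_eq_left (by linarith [hx.1])
      simp only [hr]
      rw [hχm x (by rw [hx0]; exact hx.1) (by rw [hx0]; exact hx.2), hxb, one_mul]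
    have e2 : ∫ u in (2 * b)..(a / 2), r u ≤ I :=
      intervalIntegral.integral_mono_interval (by linarith) (by linarith) (by linarith)
        (Eventually.of_forall hr0) (hii _ _)
    have e3 : C * (1 / C) = 1 := by field_simp
    have e4 := mul_le_mul_of_nonneg_left hbI hC.le
    linarith
  have hI0 : 0 < I := by linarith
  refine ⟨b, fun y => r y / I, hb0, by linarith, hrc.div_const I, ?_, ?_, ?_, ?_, ?_⟩
  · intro y; simp only [hr, hχ, abs_neg]
  · intro y; exact div_nonneg (hr0 y) hI0.le
  · intro y hy; exact (div_le_self (hr0 y) hI1).trans (hrle y hy)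
  · intro y hy hyb
    rw [intervalIntegral.integral_div]
    have : ∫ u in (0 : ℝ)..y, r u = ∫ u in (0 : ℝ)..y, (0 : ℝ) := by
      refine intervalIntegral.integral_congr fun x hx => ?_
      rw [uIcc_of_le hy] at hx
      simp only [hr]
      rw [hχb x (by rw [abs_of_nonneg hx.1]; linarith [hx.2]), zero_mul]
    rw [this]; simp
  · intro y hy
    rw [intervalIntegral.integral_div,
      ← intervalIntegral.integral_add_adjacent_intervals (hii 0 a) (hii a y)]
    have : ∫ u in a..y, r u = ∫ u in a..y, (0 : ℝ) := by
      refine intervalIntegral.integral_congr fun x hx => ?_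
      rw [uIcc_of_le hy] at hx
      simp only [hr]
      rw [hχa x (by rw [abs_of_nonneg (by linarith [hx.1])]; exact hx.1), zero_mul]
    rw [this, ← hIdef]
    simp [hI0.ne']

lemma primitive_neg_of_even {f : ℝ → ℝ} (hf : ∀ y, f (-y) = f y) (x : ℝ) :
    ∫ u in (0 : ℝ)..(-x), f u = -∫ u in (0 : ℝ)..x, f u := by
  have := intervalIntegral.integral_comp_neg (a := 0) (b := x) f
  simp only [hf, neg_zero] at this
  rw [this, ← intervalIntegral.integral_symm]

lemma primitive_neg_of_odd {f : ℝ → ℝ} (hf : ∀ y, f (-y) = -f y) (x : ℝ) :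
    ∫ u in (0 : ℝ)..(-x), f u = ∫ u in (0 : ℝ)..x, f u := by
  have := intervalIntegral.integral_comp_neg (a := 0) (b := x) f
  simp only [hf, neg_zero, intervalIntegral.integral_neg] at this
  rw [intervalIntegral.integral_symm, ← this, neg_neg]

theorem yamada_watanabe_approximation (h : ℝ → ℝ)
    (hcont : ContinuousOn h (Ici 0)) (hmono : MonotoneOn h (Ici 0))
    (h0 : h 0 = 0) (hpos : ∀ x > 0, 0 < h x)
    (hint : ∀ ε > 0, ∫⁻ v in Ioo 0 ε, ENNReal.ofReal (((h v) ^ 2)⁻¹) = ⊤) :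
    ∃ ψ : ℕ → ℝ → ℝ,
      (∀ n : ℕ, 1 ≤ n →
        ContDiff ℝ 2 (ψ n) ∧ (∀ y, ψ n (-y) = ψ n y) ∧ ψ n 0 = 0 ∧
        (∀ y, |deriv (ψ n) y| ≤ 1) ∧
        (∀ y : ℝ, y ≠ 0 → 0 ≤ deriv (deriv (ψ n)) y ∧
          deriv (deriv (ψ n)) y ≤ 2 / (n * (h |y|) ^ 2))) ∧
      (∀ v : ℝ, ∀ m n : ℕ, 1 ≤ m → m ≤ n → ψ m v ≤ ψ n v) ∧
      (∀ v : ℝ, Tendsto (fun n => ψ n v) atTop (nhds |v|)) := by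
  -- The constant `2 / (n + 1)` is positive also for `n = 0`, and below the required `2 / n`.
  have key := fun (n : ℕ) (a : {a : ℝ // 0 < a}) =>
    exists_bump h hcont hpos hint a.1 (2 / ((n : ℝ) + 1)) a.2 (by positivity)
  choose B R hB0 hB2 hRc hRe hR0 hRle hRb hRa using key
  let A : ℕ → {a : ℝ // 0 < a} := fun n => Nat.rec ⟨1, one_pos⟩ (fun k a => ⟨B k a, hB0 k a⟩) n
  have hA : ∀ n, (A (n + 1)).1 = B n (A n) := fun n => rfl
  set ρ : ℕ → ℝ → ℝ := fun n => R n (A n) with hρ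
  set φ : ℕ → ℝ → ℝ := fun n y => ∫ u in (0 : ℝ)..y, ρ n u with hφ
  set ψ : ℕ → ℝ → ℝ := fun n y => ∫ u in (0 : ℝ)..y, φ n u with hψ
  have hρc : ∀ n, Continuous (ρ n) := fun n => hRc n (A n)
  have hρ0 : ∀ n y, 0 ≤ ρ n y := fun n => hR0 n (A n)
  have dφ : ∀ n y, HasDerivAt (φ n) (ρ n y) y := fun n y =>
    (hρc n).integral_hasStrictDerivAt 0 y |>.hasDerivAt
  have hφc : ∀ n, Continuous (φ n) := fun n =>
    continuous_iff_continuousAt.2 fun y => (dφ n y).continuousAt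
  have dψ : ∀ n y, HasDerivAt (ψ n) (φ n y) y := fun n y =>
    (hφc n).integral_hasStrictDerivAt 0 y |>.hasDerivAt
  have eφ : ∀ n, deriv (φ n) = ρ n := fun n => funext fun y => (dφ n y).deriv
  have eψ : ∀ n, deriv (ψ n) = φ n := fun n => funext fun y => (dψ n y).deriv
  have hφodd : ∀ n y, φ n (-y) = -φ n y := fun n => primitive_neg_of_even (hRe n (A n))
  have hψeven : ∀ n y, ψ n (-y) = ψ n y := fun n => primitive_neg_of_odd (hφodd n)
  have hψabs : ∀ n y, ψ n y = ψ n |y| := by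
    intro n y
    rcases abs_choice y with e | e <;> rw [e]
    rw [hψeven]
  have hφmono : ∀ n, Monotone (φ n) := fun n =>
    monotone_of_deriv_nonneg (fun y => (dφ n y).differentiableAt) fun y => by
      rw [eφ]; exact hρ0 n y
  have hφzero : ∀ (n : ℕ) (y : ℝ), 0 ≤ y → y ≤ A (n + 1) → φ n y = 0 := fun n => hRb n (A n)
  have hφone : ∀ (n : ℕ) (y : ℝ), (A n).1 ≤ y → φ n y = 1 := fun n => hRa n (A n)
  have hφ0 : ∀ n y, 0 ≤ y → 0 ≤ φ n y := by
    intro n y hy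
    rw [← hφzero n 0 le_rfl (A (n + 1)).2.le]
    exact hφmono n hy
  have hφ1 : ∀ n y, φ n y ≤ 1 := by
    intro n y
    rw [← hφone n _ (le_max_right y (A n).1)]
    exact hφmono n (le_max_left _ _)
  have hφabs : ∀ n y, |φ n y| ≤ 1 := by
    intro n y
    have h1 := hφ1 n (-y)
    rw [hφodd] at h1
    exact abs_le.2 ⟨by linarith, hφ1 n y⟩
  have hφsucc : ∀ n y, 0 ≤ y → φ n y ≤ φ (n + 1) y := by
    intro n y hy
    rcases le_total y (A (n + 1)) with hl | hl
    · rw [hφzero n y hy hl]; exact hφ0 _ _ hy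
    · rw [hφone (n + 1) y hl]; exact hφ1 _ _
  have hψsucc : ∀ v : ℝ, Monotone fun n => ψ n v := by
    intro v
    refine monotone_nat_of_le_succ fun n => ?_
    rw [hψabs n, hψabs (n + 1)]
    exact intervalIntegral.integral_mono_on (abs_nonneg v) ((hφc _).intervalIntegrable _ _)
      ((hφc _).intervalIntegrable _ _) fun x hx => hφsucc n x hx.1
  have hup : ∀ n v, ψ n v ≤ |v| := by
    intro n v
    rw [hψabs]
    have := intervalIntegral.integral_mono_on (abs_nonneg v) ((hφc n).intervalIntegrable _ _)
      (intervalIntegrable_const (c := (1 : ℝ)) (μ := volume)) fun x _ => hφ1 n x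
    simpa using this
  have hψ0 : ∀ n v, 0 ≤ v → 0 ≤ ψ n v := fun n v hv =>
    intervalIntegral.integral_nonneg hv fun x hx => hφ0 n x hx.1
  have hlow : ∀ n v, |v| - (A n).1 ≤ ψ n v := by
    intro n v
    rw [hψabs]
    rcases le_total |v| (A n).1 with hl | hl
    · linarith [hψ0 n |v| (abs_nonneg v)]
    · have e : ψ n |v| = ψ n (A n).1 + ∫ u in (A n).1..|v|, φ n u :=
        (intervalIntegral.integral_add_adjacent_intervals ((hφc n).intervalIntegrable _ _)
          ((hφc n).intervalIntegrable _ _)).symm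
      have e2 : ∫ u in (A n).1..|v|, φ n u = ∫ u in (A n).1..|v|, (1 : ℝ) := by
        refine intervalIntegral.integral_congr fun x hx => ?_
        rw [uIcc_of_le hl] at hx
        exact hφone n x hx.1
      rw [e, e2]
      simpa using hψ0 n (A n).1 (A n).2.le
  have hAle : ∀ n, (A n).1 ≤ (1 / 2) ^ n := by
    intro n
    induction n with
    | zero => simp [A]
    | succ k ih =>
      rw [hA, pow_succ]
      linarith [hB2 k (A k)]
  have hAlim : Tendsto (fun n => (A n).1) atTop (nhds 0) :=
    squeeze_zero (fun n => (A n).2.le) hAle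
      (tendsto_pow_atTop_nhds_zero_of_lt_one (by norm_num) (by norm_num))
  refine ⟨ψ, ?_, fun v m n _ hmn => hψsucc v hmn, ?_⟩
  · intro n hn
    refine ⟨?_, hψeven n, by simp [hψ], ?_, ?_⟩
    · have c1 : ContDiff ℝ 1 (φ n) :=
        contDiff_one_iff_deriv.2 ⟨fun y => (dφ n y).differentiableAt, by rw [eφ]; exact hρc n⟩
      have : ContDiff ℝ (1 + 1) (ψ n) :=
        contDiff_succ_iff_deriv.2 ⟨fun y => (dψ n y).differentiableAt, by simp, by rwa [eψ]⟩
      simpa [one_add_one_eq_two] using this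
    · intro y; rw [eψ]; exact hφabs n y
    · intro y hy
      rw [eψ, eφ]
      refine ⟨hρ0 n y, (hRle n (A n) y hy).trans ?_⟩
      have hn' : (0 : ℝ) < n := by exact_mod_cast hn
      have hh : 0 < h |y| := hpos _ (abs_pos.2 hy)
      rw [div_div]
      gcongr
      linarith
  · intro v
    refine tendsto_of_tendsto_of_tendsto_of_le_of_le ?_ tendsto_const_nhds (fun n => hlow n v)
      (fun n => hup n v)
    simpa using hAlim.const_sub |v|
end
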